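/- arXiv:0812.1093 — 2 statements merged into one kernel-verified Lean document; each statement's English description precedes it below -/
import Mathlib

section
/- Let G be a finite simple graph and let w be a closed walk in G whose list of darts contains every dart of G exactly once (each edge is traversed exactly twice, once in each direction). Then for every vertex v of G, the number of indices i with 0 ≤ i < length(w) such that the i-th vertex of w equals v is exactly the degree of v in G. In particular, in the virtual ring of an oriented tree, each process appears exactly as many times as its number of neighbors. -/
/-!
Each index `i < w.length` is the position of one dart of `w`, whose source is the `i`-th vertex.
So the visits to `v` at these indices are the traversals of the darts with source `v`, and these
darts correspond to the neighbors of `v`.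
-/

theorem countP_eq_sum_count_of_mem_iff {α : Type*} [DecidableEq α] {s : Finset α} {p : α → Prop}
    [DecidablePred p] (hs : ∀ a, a ∈ s ↔ p a) (l : List α) :
    l.countP p = ∑ a ∈ s, l.count a := by
  induction l with
  | nil => simp
  | cons b l ih =>
    simp [List.countP_cons, List.count_cons, Finset.sum_add_distrib, ih, hs]

section

variable {V : Type*} {G : SimpleGraph V}

theorem range_dartOfNeighborSet (v : V) :
    Set.range (G.dartOfNeighborSet v) = {d : G.Dart | d.fst = v} := by
  ext d
  constructor
  · rintro ⟨u, rfl⟩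
    rfl
  · rintro rfl
    exact ⟨⟨d.snd, d.adj⟩, rfl⟩

variable [DecidableEq V]

theorem countP_fst_eq_sum_count_dartOfNeighborSet (l : List G.Dart) (v : V)
    [Fintype (G.neighborSet v)] :
    l.countP (·.fst = v) = ∑ u : G.neighborSet v, l.count (G.dartOfNeighborSet v u) := by
  have mem_image_iff (d : G.Dart) :
      d ∈ Finset.univ.image (G.dartOfNeighborSet v) ↔ d.fst = v := by
    rw [mem_image_univ_iff_mem_range, range_dartOfNeighborSet, Set.mem_ofPred_eq]
  rw [countP_eq_sum_count_of_mem_iff mem_image_iff,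
    Finset.sum_image (G.dartOfNeighborSet_injective v).injOn]

theorem count_getVert_eq_countP_darts_fst {a b : V} (w : G.Walk a b) (v : V) :
    Nat.count (w.getVert · = v) w.length = w.darts.countP (·.fst = v) := by
  induction w with
  | nil => rfl
  | cons h p ih =>
    rw [SimpleGraph.Walk.length_cons, Nat.count_succ', SimpleGraph.Walk.darts_cons,
      List.countP_cons]
    exact congrArg₂ (· + ·) ih (by simp)

theorem dart_eulerian_closed_walk_vertex_count_general {a b : V} (w : G.Walk a b) (v : V)
    [Fintype (G.neighborSet v)] {k : ℕ} (hw : ∀ d : G.Dart, d.fst = v → w.darts.count d = k) :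
    ((Finset.range w.length).filter (fun i => w.getVert i = v)).card = G.degree v * k :=
  calc ((Finset.range w.length).filter (fun i => w.getVert i = v)).card
    _ = Nat.count (w.getVert · = v) w.length := (Nat.count_eq_card_filter_range _ _).symm
    _ = w.darts.countP (·.fst = v) := count_getVert_eq_countP_darts_fst w v
    _ = ∑ u : G.neighborSet v, w.darts.count (G.dartOfNeighborSet v u) :=
      countP_fst_eq_sum_count_dartOfNeighborSet w.darts v
    _ = ∑ _u : G.neighborSet v, k := Finset.sum_congr rfl fun _ _ => hw _ rfl
    _ = G.degree v * k := by
      rw [Finset.sum_const, Finset.card_univ, G.card_neighborSet_eq_degree, smul_eq_mul]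

end

/-- If `w` is a closed walk in a finite simple graph `G` whose list of darts
contains every dart exactly once, then every vertex `v` occurs among the
positions `0 ≤ i < length w` of `w` exactly `degree v` times. -/
theorem dart_eulerian_closed_walk_vertex_count
    {V : Type*} [Fintype V] [DecidableEq V]
    (G : SimpleGraph V) [DecidableRel G.Adj] {r : V} (w : G.Walk r r)
    (hw : ∀ d : G.Dart, w.darts.count d = 1) (v : V) :
    ((Finset.range w.length).filter (fun i => w.getVert i = v)).card
      = G.degree v := by
  simpa only [mul_one] using dart_eulerian_closed_walk_vertex_count_general w v fun d _ => hw d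
end

section
/- Let G be a finite tree with n ≥ 2 vertices, let w be a closed walk in G whose list of darts contains every dart of G exactly once, and let p be a leaf of G (a vertex of degree 1). Then p occurs exactly once among the positions 0 ≤ i < length(w) of w, and the total number of positions 0 ≤ i < length(w) at which a vertex different from p occurs is exactly 2n−3. -/
/-! A position `i < w.length` of a walk `w` is the index of a dart of `w`, whose source is the
vertex visited at `i`. If `w` lists every dart of the graph once, then `v` is visited once for each
dart with source `v`, that is `deg v` times, and the length of `w` is the number of darts, twice the
number of edges. A tree on `n` vertices has `n - 1` edges, and a leaf has degree `1`. -/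

open Finset

section

variable {α : Type*} [Fintype α] [DecidableEq α] {l : List α}

theorem coe_list_eq_univ_val_of_count_eq_one (hl : ∀ a, l.count a = 1) :
    (l : Multiset α) = (univ : Finset α).val := by
  ext a
  rw [Multiset.coe_count, hl, Multiset.count_univ]

theorem list_length_eq_card_of_count_eq_one (hl : ∀ a, l.count a = 1) :
    l.length = Fintype.card α := by
  rw [← Multiset.coe_card, coe_list_eq_univ_val_of_count_eq_one hl, card_val, card_univ]

theorem list_countP_eq_card_filter_of_count_eq_one (hl : ∀ a, l.count a = 1)
    (P : α → Prop) [DecidablePred P] : l.countP P = #{a | P a} := by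
  rw [← Multiset.coe_countP, coe_list_eq_univ_val_of_count_eq_one hl,
    Multiset.countP_eq_card_filter, ← filter_val, card_val]

end

section

variable {V : Type*} {G : SimpleGraph V} {u v : V}

theorem card_filter_getVert_eq_countP_darts (w : G.Walk u v) (P : V → Prop) [DecidablePred P] :
    #{i ∈ range w.length | P (w.getVert i)} = w.darts.countP (fun d ↦ P d.fst) := by
  rw [← Nat.count_eq_card_filter_range]
  induction w with
  | nil => exact Nat.count_zero _
  | cons h w ih => simpa [Nat.count_succ', List.countP_cons] using! ih

variable [Fintype V] [DecidableEq V] [DecidableRel G.Adj] {w : G.Walk u v}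

theorem length_eq_twice_card_edges_of_count_darts_eq_one (hw : ∀ d : G.Dart, w.darts.count d = 1) :
    w.length = 2 * #G.edgeFinset := by
  rw [← w.length_darts, list_length_eq_card_of_count_eq_one hw, G.dart_card_eq_twice_card_edges]

theorem card_filter_getVert_eq_degree_of_count_darts_eq_one
    (hw : ∀ d : G.Dart, w.darts.count d = 1) (p : V) :
    #{i ∈ range w.length | w.getVert i = p} = G.degree p := by
  rw [card_filter_getVert_eq_countP_darts w (· = p),
    list_countP_eq_card_filter_of_count_eq_one hw, G.dart_fst_fiber_card_eq_degree]

end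

theorem dart_eulerian_closed_walk_leaf_count_general {V : Type*} [Fintype V] [DecidableEq V]
    (G : SimpleGraph V) [DecidableRel G.Adj] {u v : V} (w : G.Walk u v)
    (hw : ∀ d : G.Dart, w.darts.count d = 1) (p : V) :
    #{i ∈ range w.length | w.getVert i = p} = G.degree p ∧
    #{i ∈ range w.length | w.getVert i ≠ p} = 2 * #G.edgeFinset - G.degree p := by
  have visits := card_filter_getVert_eq_degree_of_count_darts_eq_one hw p
  refine ⟨visits, ?_⟩
  rw [filter_not, card_sdiff_of_subset (filter_subset _ _), card_range, visits,
    length_eq_twice_card_edges_of_count_darts_eq_one hw]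

/-- In a finite tree on `n ≥ 2` vertices, a closed walk whose darts contain every
dart exactly once visits a leaf `p` exactly once among positions `0 ≤ i < length w`,
and the vertices different from `p` occupy exactly `2n - 3` positions. -/
theorem dart_eulerian_closed_walk_leaf_count
    {V : Type*} [Fintype V] [DecidableEq V]
    (G : SimpleGraph V) [DecidableRel G.Adj] (hG : G.IsTree)
    (hn : 2 ≤ Fintype.card V) {r : V} (w : G.Walk r r)
    (hw : ∀ d : G.Dart, w.darts.count d = 1)
    (p : V) (hp : G.degree p = 1) :
    ((Finset.range w.length).filter (fun i => w.getVert i = p)).card = 1 ∧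
    ((Finset.range w.length).filter (fun i => w.getVert i ≠ p)).card
      = 2 * Fintype.card V - 3 := by
  have edges : #G.edgeFinset + 1 = Fintype.card V := hG.card_edgeFinset
  have ⟨visits, others⟩ := dart_eulerian_closed_walk_leaf_count_general G w hw p
  exact ⟨visits.trans hp, by lia⟩
end
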